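/- arXiv:2502.13112 — 2 statements merged into one kernel-verified Lean document; each statement's English description precedes it below -/
import Mathlib

section
/- Under (A1)–(A4), for any step size η > 0 and tightening parameter ρ ∈ [0, ε], the iterates x_1, …, x_T of the algorithm satisfy, for every point x* with g(x*) ≤ 0: ∑_{t=1}^T (f_t(x_t) − f_t(x*)) ≤ 2R²/η + (η/2)·G_f²·T + (G_f·ρ/σ)·T. -/
open scoped RealInnerProductSpace Classical

noncomputable def projBall {d : ℕ} (R : ℝ) (v : EuclideanSpace ℝ (Fin d)) :
    EuclideanSpace ℝ (Fin d) := (R / max R ‖v‖) • v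

def IsSubgradAt {d : ℕ} (g : EuclideanSpace ℝ (Fin d) → ℝ)
    (x s : EuclideanSpace ℝ (Fin d)) : Prop :=
  ∀ y, g x + ⟪s, y - x⟫ ≤ g y

/-!
A feasible comparator `q` is first moved to a point `z` of the tightened set `{g ≤ -ρ}`.
Projecting `q` onto `{g ≤ -ε}` and taking a Lagrange multiplier shows that the residual is a
positive multiple of a subgradient of `g` at the projection; this subgradient has norm at least
`σ` while `g` rises by at most `ε` along the residual, whose length is therefore at most `ε / σ`,
and by convexity `z` can be chosen on the segment between them with `‖z - q‖ ≤ ρ / σ`. Replacing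
`q` by `z` costs at most `G_f ρ / σ` per round. Against `z` the usual gradient descent analysis
applies, because the Polyak step is the projection onto a half-space that contains `{g ≤ -ρ}`, so
neither this step nor the projection onto the ball increases the distance to `z`.
-/

section Convex

variable {E : Type*} [AddCommGroup E] [Module ℝ E] {S : Set E} {f g : E → ℝ} {c : ℝ}

theorem sub_mul_neg_le_sub_mul_of_forall_le (hf : ConvexOn ℝ S f) (hg : ConvexOn ℝ S g)
    (hc : ∀ w ∈ S, g w ≤ 0 → c ≤ f w) {a b : E} (ha : a ∈ S) (hb : b ∈ S)
    (hga : 0 < g a) (hgb : g b < 0) :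
    (c - f a) * -g b ≤ (f b - c) * g a := by
  have hD : 0 < g a - g b := by linarith
  have hα : 0 ≤ -g b / (g a - g b) := div_nonneg (by linarith) hD.le
  have hβ : 0 ≤ g a / (g a - g b) := div_nonneg hga.le hD.le
  have hαβ : -g b / (g a - g b) + g a / (g a - g b) = 1 := by field_simp; ring
  have hle := hc _ (hf.1 ha hb hα hβ hαβ) <| (hg.2 ha hb hα hβ hαβ).trans_eq <| by
    simp only [smul_eq_mul]; ring
  have hcomb : c ≤ (-g b * f a + g a * f b) / (g a - g b) :=
    (hle.trans (hf.2 ha hb hα hβ hαβ)).trans_eq <| by simp only [smul_eq_mul]; ring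
  rw [le_div_iff₀ hD] at hcomb
  linarith

theorem exists_lagrange_multiplier (hf : ConvexOn ℝ S f) (hg : ConvexOn ℝ S g)
    (slater : ∃ b ∈ S, g b < 0) (hc : ∀ w ∈ S, g w ≤ 0 → c ≤ f w) :
    ∃ m, 0 ≤ m ∧ ∀ w ∈ S, c ≤ f w + m * g w := by
  let lower : Set ℝ := insert 0 ((fun w ↦ (c - f w) / g w) '' {w ∈ S | 0 < g w})
  let upper : Set ℝ := (fun w ↦ (f w - c) / -g w) '' {w ∈ S | g w < 0}
  have hsep : ∀ l ∈ lower, ∀ u ∈ upper, l ≤ u := by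
    rintro l (rfl | ⟨a, ⟨ha, hga⟩, rfl⟩) u ⟨b, ⟨hb, hgb⟩, rfl⟩
    · exact div_nonneg (sub_nonneg.2 (hc b hb hgb.le)) (neg_pos.2 hgb).le
    · exact (div_le_div_iff₀ hga (neg_pos.2 hgb)).2
        (sub_mul_neg_le_sub_mul_of_forall_le hf hg hc ha hb hga hgb)
  obtain ⟨m, hlower, hupper⟩ :=
    exists_between_of_forall_le ⟨0, Set.mem_insert _ _⟩ (Set.Nonempty.image _ slater) hsep
  refine ⟨m, hlower (Set.mem_insert _ _), fun w hw ↦ ?_⟩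
  rcases lt_trichotomy (g w) 0 with hgw | hgw | hgw
  · have := (le_div_iff₀ (neg_pos.2 hgw)).1 (hupper ⟨w, ⟨hw, hgw⟩, rfl⟩)
    linarith
  · simpa [hgw] using hc w hw hgw.le
  · have := (div_le_iff₀ hgw).1 (hlower (Set.mem_insert_of_mem _ ⟨w, ⟨hw, hgw⟩, rfl⟩))
    linarith

end Convex

section NormedSpace

variable {E : Type*} [NormedAddCommGroup E] [NormedSpace ℝ E]

/-- The radial map onto the closed ball of radius `R > 0`; in an inner product space it is the
Euclidean projection. On `EuclideanSpace ℝ (Fin d)` it is definitionally `projBall`. -/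
noncomputable def ballProj (R : ℝ) (v : E) : E :=
  (R / max R ‖v‖) • v

theorem norm_ballProj_le {R : ℝ} (hR : 0 < R) (v : E) : ‖ballProj R v‖ ≤ R := by
  have hmax : 0 < max R ‖v‖ := lt_max_of_lt_left hR
  rw [ballProj, norm_smul, Real.norm_of_nonneg (by positivity), div_mul_eq_mul_div,
    div_le_iff₀ hmax]
  gcongr
  exact le_max_right _ _

theorem mem_closedBall_of_eq_ballProj {R : ℝ} (hR : 0 < R) {T : ℕ} {x v : ℕ → E}
    (hx1 : x 1 ∈ Metric.closedBall 0 R)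
    (hx : ∀ t ∈ Finset.Icc 1 T, x (t + 1) = ballProj R (v t)) :
    ∀ t ∈ Finset.Icc 1 T, x t ∈ Metric.closedBall 0 R := by
  rintro (_ | _ | t) ht
  · simp at ht
  · exact hx1
  · rw [hx (t + 1) (by simp only [Finset.mem_Icc] at ht ⊢; omega)]
    simpa using norm_ballProj_le hR (v (t + 1))

end NormedSpace

section InnerProductSpace

variable {E : Type*} [NormedAddCommGroup E] [InnerProductSpace ℝ E]

/-- `s` is a subgradient of `g` at `x`, in any real inner product space. On a Euclidean space this
unfolds to the same proposition as `IsSubgradAt`. -/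
def IsSubgradient (g : E → ℝ) (x s : E) : Prop :=
  ∀ y, g x + ⟪s, y - x⟫ ≤ g y

theorem eq_and_exists_pos_isSubgradient_of_normal {g : E → ℝ} {c : ℝ} {p u : E}
    (hg : ConvexOn ℝ Set.univ g) (slater : ∃ b, g b < c) (hp : g p ≤ c) (hu : u ≠ 0)
    (hnormal : ∀ w, g w ≤ c → ⟪u, w - p⟫ ≤ 0) :
    g p = c ∧ ∃ m : ℝ, 0 < m ∧ IsSubgradient g p (m • u) := by
  obtain ⟨b, hb⟩ := slater
  have hlin : ConvexOn ℝ Set.univ fun w ↦ -⟪u, w - p⟫ := by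
    refine ⟨convex_univ, fun v _ w _ α β _ _ hαβ ↦ le_of_eq ?_⟩
    simp only [inner_sub_right, inner_add_right, real_inner_smul_right, smul_eq_mul]
    linear_combination -⟪u, p⟫ * hαβ
  obtain ⟨l, hl0, hl⟩ := exists_lagrange_multiplier (c := 0) hlin (hg.add_const (-c))
    ⟨b, trivial, show g b + -c < 0 by linarith⟩
    fun w _ hw ↦ neg_nonneg.2 (hnormal w (by simpa using hw))
  replace hl : ∀ w, ⟪u, w - p⟫ ≤ l * (g w - c) := fun w ↦ by
    have := hl w trivial
    simp only [Pi.add_apply] at this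
    linarith
  have hlpos : 0 < l := by
    refine hl0.lt_of_ne' fun hl_zero ↦ hu (real_inner_self_nonpos.1 ?_)
    simpa [hl_zero] using hl (p + u)
  have hgp : g p = c := by
    refine hp.antisymm (sub_nonneg.1 (nonneg_of_mul_nonneg_right ?_ hlpos))
    simpa using hl p
  refine ⟨hgp, l⁻¹, inv_pos.2 hlpos, fun w ↦ ?_⟩
  have := (inv_mul_le_iff₀ hlpos).2 (hl w)
  rw [real_inner_smul_left, hgp]
  linarith

theorem exists_le_norm_sub_le_max_div [CompleteSpace E] {g : E → ℝ} {c σ : ℝ}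
    (hg : ConvexOn ℝ Set.univ g) (hlsc : LowerSemicontinuous g) (hσ : 0 < σ)
    (hne : ∃ z, g z = c) (hsub : ∀ z, g z = c → ∀ s, IsSubgradient g z s → σ ≤ ‖s‖) (q : E) :
    ∃ p, g p ≤ c ∧ ‖p - q‖ ≤ max (g q - c) 0 / σ := by
  by_cases hq : g q ≤ c
  · exact ⟨q, hq, by simp [hq]⟩
  obtain ⟨z, hz⟩ := hne
  have slater : ∃ b, g b < c := by
    by_contra! hmin
    have hzero : IsSubgradient g z 0 := fun w ↦ by simpa [hz] using hmin w
    simpa using hσ.trans_le (hsub z hz 0 hzero)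
  have hconv : Convex ℝ {w | g w ≤ c} := by simpa using hg.convex_le c
  obtain ⟨p, hp, hproj⟩ := exists_norm_eq_iInf_of_complete_convex ⟨z, hz.le⟩
    (hlsc.isClosed_preimage c).isComplete hconv q
  have hnormal := (norm_eq_iInf_iff_real_inner_le_zero hconv hp).1 hproj
  have hqp : q - p ≠ 0 := sub_ne_zero.2 fun h ↦ hq (h ▸ hp)
  obtain ⟨hgp, m, hm, hsubgrad⟩ :=
    eq_and_exists_pos_isSubgradient_of_normal hg slater hp hqp hnormal
  have hσm : σ ≤ m * ‖q - p‖ := by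
    simpa [norm_smul, abs_of_pos hm] using hsub p hgp _ hsubgrad
  have hrise : m * ‖q - p‖ * ‖q - p‖ ≤ g q - c := by
    have := hsubgrad q
    rw [real_inner_smul_left, real_inner_self_eq_norm_sq, hgp] at this
    linarith
  refine ⟨p, hp, (le_div_iff₀' hσ).2 ?_⟩
  calc σ * ‖p - q‖ = σ * ‖q - p‖ := by rw [norm_sub_rev]
    _ ≤ m * ‖q - p‖ * ‖q - p‖ := by gcongr
    _ ≤ max (g q - c) 0 := hrise.trans (le_max_left _ _)

theorem exists_le_neg_norm_sub_le_div [CompleteSpace E] {g : E → ℝ} {ε ρ σ : ℝ}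
    (hg : ConvexOn ℝ Set.univ g) (hlsc : LowerSemicontinuous g) (hσ : 0 < σ) (hε : 0 < ε)
    (hne : ∃ z, g z = -ε) (hsub : ∀ z, g z = -ε → ∀ s, IsSubgradient g z s → σ ≤ ‖s‖)
    (hρ : 0 ≤ ρ) (hρε : ρ ≤ ε) {q : E} (hq : g q ≤ 0) :
    ∃ z, g z ≤ -ρ ∧ ‖z - q‖ ≤ ρ / σ := by
  obtain ⟨p, hp, hpq⟩ := exists_le_norm_sub_le_max_div hg hlsc hσ hne hsub q
  have hθ : 0 ≤ ρ / ε := by positivity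
  have hθ' : 0 ≤ 1 - ρ / ε := sub_nonneg.2 ((div_le_one hε).2 hρε)
  refine ⟨(1 - ρ / ε) • q + (ρ / ε) • p, ?_, ?_⟩
  · calc g ((1 - ρ / ε) • q + (ρ / ε) • p)
        ≤ (1 - ρ / ε) * g q + ρ / ε * g p := hg.2 trivial trivial hθ' hθ (by ring)
      _ ≤ (1 - ρ / ε) * 0 + ρ / ε * -ε := by gcongr
      _ = -ρ := by field_simp; ring
  · calc ‖(1 - ρ / ε) • q + (ρ / ε) • p - q‖ = ‖(ρ / ε) • (p - q)‖ := by congr 1; module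
      _ = ρ / ε * ‖p - q‖ := by rw [norm_smul, Real.norm_of_nonneg hθ]
      _ ≤ ρ / ε * (ε / σ) := by
        gcongr
        refine hpq.trans ?_
        gcongr
        exact max_le (by linarith) hε.le
      _ = ρ / σ := by field_simp

/-- The projection of `v` onto the half-space `{w | a + ⟪s, w - v⟫ ≤ 0}`, where `a` is the value at
`v` of the affine function that defines the half-space. For `s = 0` it is `v`. -/
noncomputable def halfSpaceProj (a : ℝ) (s v : E) : E :=
  v - (max a 0 / ‖s‖ ^ 2) • s

theorem halfSpaceProj_zero (a : ℝ) (v : E) : halfSpaceProj a 0 v = v := by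
  simp [halfSpaceProj]

theorem norm_halfSpaceProj_sub_le {a : ℝ} {s v z : E} (h : a ≤ ⟪s, v - z⟫) :
    ‖halfSpaceProj a s v - z‖ ≤ ‖v - z‖ := by
  rcases eq_or_ne s 0 with rfl | hs
  · rw [halfSpaceProj_zero]
  have hs' : 0 < ‖s‖ ^ 2 := by positivity
  set κ := max a 0 / ‖s‖ ^ 2 with hκ
  have hκ0 : 0 ≤ κ := by positivity
  have hinner : κ * (κ * ‖s‖ ^ 2) ≤ κ * ⟪s, v - z⟫ := by
    rw [hκ, div_mul_cancel₀ _ hs'.ne', div_mul_eq_mul_div, div_mul_eq_mul_div]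
    gcongr ?_ / _
    rcases le_total a 0 with ha | ha
    · simp [ha]
    · simpa [ha] using mul_le_mul_of_nonneg_left h ha
  refine le_of_sq_le_sq ?_ (norm_nonneg _)
  calc ‖halfSpaceProj a s v - z‖ ^ 2 = ‖(v - z) - κ • s‖ ^ 2 := by
        rw [halfSpaceProj, sub_right_comm]
    _ = ‖v - z‖ ^ 2 - 2 * (κ * ⟪s, v - z⟫) + κ * (κ * ‖s‖ ^ 2) := by
        rw [norm_sub_sq_real, real_inner_smul_right, real_inner_comm, norm_smul,
          Real.norm_of_nonneg hκ0]
        ring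
    _ ≤ ‖v - z‖ ^ 2 := by nlinarith [mul_nonneg hκ0 (mul_nonneg hκ0 hs'.le)]

theorem ballProj_eq_halfSpaceProj {R : ℝ} (hR : 0 < R) (v : E) :
    ballProj R v = halfSpaceProj (‖v‖ ^ 2 - R * ‖v‖) v v := by
  rw [ballProj, halfSpaceProj]
  rcases le_or_gt ‖v‖ R with hv | hv
  · have ha : ‖v‖ ^ 2 - R * ‖v‖ ≤ 0 := by nlinarith [norm_nonneg v]
    rw [max_eq_left hv, max_eq_right ha, div_self hR.ne', zero_div, one_smul, zero_smul, sub_zero]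
  · have hv0 : 0 < ‖v‖ := hR.trans hv
    have ha : 0 ≤ ‖v‖ ^ 2 - R * ‖v‖ := by nlinarith
    have hcoeff : R / ‖v‖ = 1 - (‖v‖ ^ 2 - R * ‖v‖) / ‖v‖ ^ 2 := by field_simp; ring
    rw [max_eq_right hv.le, max_eq_left ha, hcoeff, sub_smul, one_smul]

theorem norm_ballProj_sub_le {R : ℝ} (hR : 0 < R) (v : E) {z : E} (hz : ‖z‖ ≤ R) :
    ‖ballProj R v - z‖ ≤ ‖v - z‖ := by
  rw [ballProj_eq_halfSpaceProj hR]
  refine norm_halfSpaceProj_sub_le ?_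
  have : ⟪v, z⟫ ≤ R * ‖v‖ := (real_inner_le_norm v z).trans (by nlinarith [norm_nonneg v])
  rw [inner_sub_right, real_inner_self_eq_norm_sq]
  linarith

theorem norm_ballProj_halfSpaceProj_sub_le {g : E → ℝ} {R ρ : ℝ} {x s z : E} (hR : 0 < R)
    (hs : IsSubgradient g x s) (hgz : g z ≤ -ρ) (hz : ‖z‖ ≤ R) (y : E) :
    ‖ballProj R (halfSpaceProj (g x + ⟪s, y - x⟫ + ρ) s y) - z‖ ≤ ‖y - z‖ := by
  refine (norm_ballProj_sub_le hR _ hz).trans (norm_halfSpaceProj_sub_le ?_)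
  have hlin : g x + ⟪s, z - x⟫ ≤ -ρ := (hs z).trans hgz
  have hsplit : ⟪s, y - z⟫ = ⟪s, y - x⟫ - ⟪s, z - x⟫ := by
    rw [← inner_sub_right, sub_sub_sub_cancel_right]
  linarith

theorem inner_le_of_norm_sub_le {η : ℝ} (hη : 0 < η) {x x' v z : E}
    (h : ‖x' - z‖ ≤ ‖x - η • v - z‖) :
    ⟪v, x - z⟫ ≤ (‖x - z‖ ^ 2 - ‖x' - z‖ ^ 2) / (2 * η) + η / 2 * ‖v‖ ^ 2 := by
  have hsq : ‖x' - z‖ ^ 2 ≤ ‖x - z‖ ^ 2 - 2 * (η * ⟪v, x - z⟫) + η ^ 2 * ‖v‖ ^ 2 :=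
    calc ‖x' - z‖ ^ 2 ≤ ‖(x - z) - η • v‖ ^ 2 := by rw [sub_right_comm]; gcongr
      _ = ‖x - z‖ ^ 2 - 2 * (η * ⟪v, x - z⟫) + η ^ 2 * ‖v‖ ^ 2 := by
        rw [norm_sub_sq_real, real_inner_smul_right, real_inner_comm, norm_smul,
          Real.norm_of_nonneg hη.le, mul_pow]
  calc ⟪v, x - z⟫ = 2 * (η * ⟪v, x - z⟫) / (2 * η) := by field_simp
    _ ≤ (‖x - z‖ ^ 2 - ‖x' - z‖ ^ 2 + η ^ 2 * ‖v‖ ^ 2) / (2 * η) := by gcongr; linarith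
    _ = (‖x - z‖ ^ 2 - ‖x' - z‖ ^ 2) / (2 * η) + η / 2 * ‖v‖ ^ 2 := by field_simp

theorem sum_inner_le_of_norm_sub_le {η G : ℝ} (hη : 0 < η) {x v : ℕ → E} {z : E} {T : ℕ}
    (hstep : ∀ t ∈ Finset.Icc 1 T, ‖x (t + 1) - z‖ ≤ ‖x t - η • v t - z‖)
    (hv : ∀ t ∈ Finset.Icc 1 T, ‖v t‖ ≤ G) :
    ∑ t ∈ Finset.Icc 1 T, ⟪v t, x t - z⟫ ≤
      (‖x 1 - z‖ ^ 2 - ‖x (T + 1) - z‖ ^ 2) / (2 * η) + η / 2 * G ^ 2 * T := by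
  induction T with
  | zero => simp
  | succ n ih =>
    have hmem : n + 1 ∈ Finset.Icc 1 (n + 1) := by simp
    have hsub : Finset.Icc 1 n ⊆ Finset.Icc 1 (n + 1) := Finset.Icc_subset_Icc_right n.le_succ
    have hlast := inner_le_of_norm_sub_le hη (hstep _ hmem)
    have hG : η / 2 * ‖v (n + 1)‖ ^ 2 ≤ η / 2 * G ^ 2 := by gcongr; exact hv _ hmem
    have hinit := ih (fun t ht ↦ hstep t (hsub ht)) fun t ht ↦ hv t (hsub ht)
    rw [Finset.sum_Icc_succ_top n.succ_pos]
    push_cast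
    linear_combination hinit + hlast + hG

theorem sub_le_inner_gradient [CompleteSpace E] {S : Set E} {f : E → ℝ} {a b : E}
    (hf : ConvexOn ℝ S f) (ha : a ∈ S) (hb : b ∈ S) (hd : DifferentiableAt ℝ f a) :
    f a - f b ≤ ⟪gradient f a, a - b⟫ := by
  let line : ℝ →ᵃ[ℝ] E := AffineMap.lineMap a b
  have hline : HasDerivAt (f ∘ line) (fderiv ℝ f a (b - a)) 0 := by
    refine HasFDerivAt.comp_hasDerivAt 0 ?_ AffineMap.hasDerivAt_lineMap
    simpa [line] using hd.hasFDerivAt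
  have hslope := (hf.comp_affineMap line).le_slope_of_hasDerivAt
    (x := 0) (y := 1) (by simpa [line]) (by simpa [line]) zero_lt_one hline
  have hab : fderiv ℝ f a (b - a) ≤ f b - f a := by simpa [line, slope_def_field] using hslope
  rw [← inner_gradient_left, ← neg_sub a b, inner_neg_right] at hab
  linarith

theorem sub_le_inner_gradient_add [CompleteSpace E] {S : Set E} {f : E → ℝ} {G : ℝ} {x z q : E}
    (hf : ConvexOn ℝ S f) (hd : ∀ w ∈ S, DifferentiableAt ℝ f w)
    (hG : ∀ w ∈ S, ‖gradient f w‖ ≤ G) (hx : x ∈ S) (hz : z ∈ S) (hq : q ∈ S) :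
    f x - f q ≤ ⟪gradient f x, x - z⟫ + G * ‖z - q‖ := by
  have hxz := sub_le_inner_gradient hf hx hz (hd x hx)
  have hzq : f z - f q ≤ G * ‖z - q‖ :=
    calc f z - f q ≤ ⟪gradient f z, z - q⟫ := sub_le_inner_gradient hf hz hq (hd z hz)
      _ ≤ ‖gradient f z‖ * ‖z - q‖ := real_inner_le_norm _ _
      _ ≤ G * ‖z - q‖ := by gcongr; exact hG z hz
  linarith

theorem stmt0_general [CompleteSpace E] {T : ℕ} {R Gf ε σ η ρ : ℝ} {g : E → ℝ} {f : ℕ → E → ℝ}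
    {x y s : ℕ → E} (hR : 0 < R)
    (hgconv : ConvexOn ℝ Set.univ g) (hglsc : LowerSemicontinuous g)
    (hA1 : {z | g z ≤ 0} ⊆ Metric.closedBall 0 R)
    (hfconv : ∀ t ∈ Finset.Icc 1 T, ConvexOn ℝ (Metric.closedBall 0 R) (f t))
    (hfdiff : ∀ t ∈ Finset.Icc 1 T, ∀ z ∈ Metric.closedBall 0 R, DifferentiableAt ℝ (f t) z)
    (hA2 : ∀ t ∈ Finset.Icc 1 T, ∀ z ∈ Metric.closedBall 0 R, ‖gradient (f t) z‖ ≤ Gf)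
    (hσ : 0 < σ) (hε : 0 < ε) (hA4ne : ∃ z, g z = -ε)
    (hA4 : ∀ z, g z = -ε → ∀ sz, IsSubgradient g z sz → σ ≤ ‖sz‖)
    (hη : 0 < η) (hρ0 : 0 ≤ ρ) (hρε : ρ ≤ ε) (hx1 : x 1 ∈ Metric.closedBall 0 R)
    (hs : ∀ t ∈ Finset.Icc 1 T, IsSubgradient g (x t) (s t))
    (hy : ∀ t ∈ Finset.Icc 1 T, y t = x t - η • gradient (f t) (x t))
    (hupd : ∀ t ∈ Finset.Icc 1 T, x (t + 1) =
      ballProj R (halfSpaceProj (g (x t) + ⟪s t, y t - x t⟫ + ρ) (s t) (y t)))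
    {q : E} (hq : g q ≤ 0) :
    ∑ t ∈ Finset.Icc 1 T, (f t (x t) - f t q) ≤
      2 * R ^ 2 / η + η / 2 * Gf ^ 2 * T + Gf * ρ / σ * T := by
  obtain ⟨z, hgz, hzq⟩ :=
    exists_le_neg_norm_sub_le_div hgconv hglsc hσ hε hA4ne hA4 hρ0 hρε hq
  have hz : z ∈ Metric.closedBall 0 R := hA1 (hgz.trans (neg_nonpos.2 hρ0))
  have hx := mem_closedBall_of_eq_ballProj hR hx1 hupd
  have hstep : ∀ t ∈ Finset.Icc 1 T,
      ‖x (t + 1) - z‖ ≤ ‖x t - η • gradient (f t) (x t) - z‖ := fun t ht ↦ by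
    rw [hupd t ht, ← hy t ht]
    exact norm_ballProj_halfSpaceProj_sub_le hR (hs t ht) hgz (mem_closedBall_zero_iff.1 hz) (y t)
  have hloss : ∀ t ∈ Finset.Icc 1 T,
      f t (x t) - f t q ≤ ⟪gradient (f t) (x t), x t - z⟫ + Gf * ρ / σ := fun t ht ↦ by
    have hGf : 0 ≤ Gf := (norm_nonneg _).trans (hA2 t ht z hz)
    rw [mul_div_assoc]
    exact (sub_le_inner_gradient_add (hfconv t ht) (hfdiff t ht) (hA2 t ht) (hx t ht) hz
      (hA1 hq)).trans (by gcongr)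
  have hinit : ‖x 1 - z‖ ≤ 2 * R := by
    linarith [norm_sub_le (x 1) z, mem_closedBall_zero_iff.1 hx1, mem_closedBall_zero_iff.1 hz]
  have hdiam : (‖x 1 - z‖ ^ 2 - ‖x (T + 1) - z‖ ^ 2) / (2 * η) ≤ 2 * R ^ 2 / η :=
    calc (‖x 1 - z‖ ^ 2 - ‖x (T + 1) - z‖ ^ 2) / (2 * η) ≤ (2 * R) ^ 2 / (2 * η) := by
          gcongr
          exact (sub_le_self _ (sq_nonneg _)).trans (by gcongr)
      _ = 2 * R ^ 2 / η := by field_simp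
  have hsum := sum_inner_le_of_norm_sub_le hη hstep fun t ht ↦ hA2 t ht _ (hx t ht)
  calc ∑ t ∈ Finset.Icc 1 T, (f t (x t) - f t q)
      ≤ ∑ t ∈ Finset.Icc 1 T, (⟪gradient (f t) (x t), x t - z⟫ + Gf * ρ / σ) :=
        Finset.sum_le_sum hloss
    _ = ∑ t ∈ Finset.Icc 1 T, ⟪gradient (f t) (x t), x t - z⟫ + Gf * ρ / σ * T := by
        simp [Finset.sum_add_distrib, mul_comm]
    _ ≤ 2 * R ^ 2 / η + η / 2 * Gf ^ 2 * T + Gf * ρ / σ * T := by linarith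

end InnerProductSpace

theorem stmt0 {d T : ℕ} (hT : 1 ≤ T)
    {R Gf Gg ε σ η ρ : ℝ}
    (g : EuclideanSpace ℝ (Fin d) → ℝ)
    (f : ℕ → EuclideanSpace ℝ (Fin d) → ℝ)
    (x y s : ℕ → EuclideanSpace ℝ (Fin d))
    (hR : 0 < R) (hGf : 0 < Gf) (hGg : 0 < Gg)
    (hgconv : ConvexOn ℝ Set.univ g)
    (hA1 : {z : EuclideanSpace ℝ (Fin d) | g z ≤ 0} ⊆ Metric.closedBall 0 R)
    (hfconv : ∀ t ∈ Finset.Icc 1 T, ConvexOn ℝ Set.univ (f t))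
    (hfdiff : ∀ t ∈ Finset.Icc 1 T, Differentiable ℝ (f t))
    (hA2 : ∀ t ∈ Finset.Icc 1 T, ∀ z ∈ Metric.closedBall (0 : EuclideanSpace ℝ (Fin d)) R,
      ‖gradient (f t) z‖ ≤ Gf)
    (hA3 : ∀ z ∈ Metric.closedBall (0 : EuclideanSpace ℝ (Fin d)) R,
      ∀ sz, IsSubgradAt g z sz → ‖sz‖ ≤ Gg)
    (hσ : 0 < σ) (hε : 0 < ε) (hσGg : σ ≤ Gg)
    (hA4ne : ∃ z, g z = -ε)
    (hA4 : ∀ z : EuclideanSpace ℝ (Fin d), g z = -ε → ∀ sz, IsSubgradAt g z sz → σ ≤ ‖sz‖)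
    (hη : 0 < η) (hρ0 : 0 ≤ ρ) (hρε : ρ ≤ ε)
    (hx1 : x 1 ∈ Metric.closedBall (0 : EuclideanSpace ℝ (Fin d)) R)
    (hs : ∀ t ∈ Finset.Icc 1 T, IsSubgradAt g (x t) (s t))
    (hy : ∀ t ∈ Finset.Icc 1 T, y t = x t - η • gradient (f t) (x t))
    (hupd : ∀ t ∈ Finset.Icc 1 T,
      x (t + 1) = if s t ≠ 0 then
          projBall R (y t - ((max (g (x t) + ⟪s t, y t - x t⟫ + ρ) 0) / ‖s t‖ ^ 2) • s t)
        else projBall R (y t))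
    :
    ∀ xstar : EuclideanSpace ℝ (Fin d), g xstar ≤ 0 →
      ∑ t ∈ Finset.Icc 1 T, (f t (x t) - f t xstar) ≤
        2 * R ^ 2 / η + η / 2 * Gf ^ 2 * T + Gf * ρ / σ * T := by
  have hgcont : Continuous g := continuousOn_univ.1 (hgconv.continuousOn isOpen_univ)
  have hupd' : ∀ t ∈ Finset.Icc 1 T, x (t + 1) =
      ballProj R (halfSpaceProj (g (x t) + ⟪s t, y t - x t⟫ + ρ) (s t) (y t)) := fun t ht ↦ by
    rw [hupd t ht]
    split_ifs with hst
    · rfl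
    · rw [not_ne_iff.1 hst, halfSpaceProj_zero]; rfl
  exact fun xstar hxstar ↦ stmt0_general hR hgconv hgcont.lowerSemicontinuous hA1
    (fun t ht ↦ (hfconv t ht).subset (Set.subset_univ _) (convex_closedBall 0 R))
    (fun t ht z _ ↦ hfdiff t ht z) hA2 hσ hε hA4ne hA4 hη hρ0 hρε hx1 hs hy hupd' hxstar
end

section
/- Under (A1)–(A4), for any step size η > 0 and tightening parameter ρ ∈ [0, ε], the iterates x_1, …, x_T of the algorithm satisfy, for all t ∈ {1,…,T}: g(x_t) ≤ G_g·γ^{(t−1)/2}·dist(x_1, X_ρ) + η·G_g·G_f/(1 − √γ) − ρ. -/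
open scoped RealInnerProductSpace Classical

/-!
Write `K = {g ≤ -ρ}` and `q = √(1 - σ² / Gg²)`. If `g x > -ε`, the point `z` of `{g ≤ -ε}` nearest
to `x` carries a subgradient parallel to `x - z`, by a Lagrange multiplier argument, so the lower
bound `σ` on subgradients gives `σ * ‖x - z‖ ≤ g x + ε`. Convexity along the segment from `x` to `z`
turns this into the error bound `σ * dist(x, K) ≤ [g x + ρ]₊`.

The feasibility step projects onto a half-space that contains `K`. Started from `x t` instead of
`y t` it would contract the distance to `K` by the factor `q`, by the error bound; projections being
nonexpansive, starting from `y t` costs at most `‖y t - x t‖ ≤ η * Gf` more. Summing the geometric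
series bounds `dist(x t, K)`, and `g (x t) + ρ ≤ Gg * dist(x t, K)`.
-/

theorem le_pow_mul_add_div_of_le_mul_add {𝕜 : Type*} [Field 𝕜] [LinearOrder 𝕜]
    [IsStrictOrderedRing 𝕜] {a : ℕ → 𝕜} {q c : 𝕜} {N : ℕ} (hq0 : 0 ≤ q) (hq1 : q < 1)
    (hc : 0 ≤ c) (ha : ∀ n < N, a (n + 1) ≤ q * a n + c) :
    ∀ n ≤ N, a n ≤ q ^ n * a 0 + c / (1 - q) := by
  have hq : 0 < 1 - q := sub_pos.2 hq1
  intro n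
  induction n with
  | zero => intro _; simpa using div_nonneg hc hq.le
  | succ n ih =>
    intro hn
    calc a (n + 1) ≤ q * a n + c := ha n hn
      _ ≤ q * (q ^ n * a 0 + c / (1 - q)) + c := by gcongr; exact ih (by lia)
      _ = q ^ (n + 1) * a 0 + c / (1 - q) := by field_simp; ring

theorem sqrt_one_sub_sq_div_sq_lt_one {σ G : ℝ} (hσ : 0 < σ) (hG : 0 < G) :
    Real.sqrt (1 - σ ^ 2 / G ^ 2) < 1 := by
  rw [Real.sqrt_lt' one_pos, one_pow]
  exact sub_lt_self 1 (by positivity)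

section Multiplier

variable {E : Type*} [AddCommGroup E] [Module ℝ E] {D : Set E} {g h : E → ℝ}

theorem div_le_div_of_convexOn_of_concaveOn (hg : ConvexOn ℝ D g) (hh : ConcaveOn ℝ D h)
    (hgh : ∀ w ∈ D, g w ≤ 0 → h w ≤ 0) {y z : E} (hy : y ∈ D) (hz : z ∈ D)
    (hgy : 0 < g y) (hgz : g z < 0) : h y / g y ≤ h z / g z := by
  have hpos : 0 < g y - g z := by linarith
  -- The weights are those for which the chord of `g` from `y` to `z` vanishes.
  set α := -g z / (g y - g z) with hα
  set β := g y / (g y - g z) with hβ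
  have hα0 : 0 ≤ α := div_nonneg (by linarith) hpos.le
  have hβ0 : 0 ≤ β := div_nonneg hgy.le hpos.le
  have hαβ : α + β = 1 := by rw [hα, hβ]; field_simp; ring
  have hgw : g (α • y + β • z) ≤ 0 := by
    refine (hg.2 hy hz hα0 hβ0 hαβ).trans_eq ?_
    simp only [smul_eq_mul, hα, hβ]
    ring
  have hchord : α * h y + β * h z ≤ 0 :=
    (hh.2 hy hz hα0 hβ0 hαβ).trans (hgh _ (hg.1 hy hz hα0 hβ0 hαβ) hgw)
  have hcross : -g z * h y + g y * h z ≤ 0 := by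
    have : α * h y + β * h z = (-g z * h y + g y * h z) / (g y - g z) := by rw [hα, hβ]; ring
    rwa [this, div_le_iff₀ hpos, zero_mul] at hchord
  rw [div_le_iff₀ hgy, div_mul_eq_mul_div, le_div_iff_of_neg hgz]
  linarith

theorem exists_nonneg_forall_le_mul_of_convexOn_of_concaveOn (hg : ConvexOn ℝ D g)
    (hh : ConcaveOn ℝ D h) (hslater : ∃ z ∈ D, g z < 0) (hgh : ∀ y ∈ D, g y ≤ 0 → h y ≤ 0) :
    ∃ l : ℝ, 0 ≤ l ∧ ∀ y ∈ D, h y ≤ l * g y := by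
  set S : Set ℝ := (fun z => h z / g z) '' {z ∈ D | g z < 0}
  have hS0 : ∀ r ∈ S, 0 ≤ r := by
    rintro _ ⟨z, ⟨hzD, hz⟩, rfl⟩
    exact div_nonneg_of_nonpos (hgh z hzD hz.le) hz.le
  have hSne : S.Nonempty := Set.Nonempty.image _ hslater
  refine ⟨sInf S, Real.sInf_nonneg hS0, fun y hy => ?_⟩
  rcases lt_trichotomy (g y) 0 with hneg | hzero | hpos
  · exact (le_div_iff_of_neg hneg).1 (csInf_le ⟨0, hS0⟩ ⟨y, ⟨hy, hneg⟩, rfl⟩)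
  · simpa [hzero] using hgh y hy hzero.le
  · refine (div_le_iff₀ hpos).1 (le_csInf hSne ?_)
    rintro _ ⟨z, ⟨hzD, hz⟩, rfl⟩
    exact div_le_div_of_convexOn_of_concaveOn hg hh hgh hy hzD hpos hz

end Multiplier

theorem isClosed_sublevel_of_convexOn {E : Type*} [NormedAddCommGroup E] [NormedSpace ℝ E]
    [FiniteDimensional ℝ E] {g : E → ℝ} (hg : ConvexOn ℝ Set.univ g) (c : ℝ) :
    IsClosed {z | g z ≤ c} :=
  isClosed_le (continuousOn_univ.1 (hg.continuousOn isOpen_univ)) continuous_const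

section HalfspaceProj

variable {E : Type*} [NormedAddCommGroup E] [InnerProductSpace ℝ E]

/-- The metric projection of `v` onto the half-space `{w | ⟪s, w⟫ ≤ b}`; the Polyak feasibility
step is of this form. For `s = 0`, where that set is everything or empty, `x / 0 = 0` makes this
the identity. -/
noncomputable def halfspaceProj (s : E) (b : ℝ) (v : E) : E :=
  v - (max (⟪s, v⟫ - b) 0 / ‖s‖ ^ 2) • s

theorem norm_sub_div_norm_sq_smul_sq (s u : E) (m : ℝ) :
    ‖u - (m / ‖s‖ ^ 2) • s‖ ^ 2 = ‖u‖ ^ 2 - m * (2 * ⟪s, u⟫ - m) / ‖s‖ ^ 2 := by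
  rcases eq_or_ne s 0 with rfl | hs
  · simp
  · have : ‖s‖ ≠ 0 := norm_ne_zero_iff.2 hs
    rw [norm_sub_sq_real, real_inner_smul_right, norm_smul, mul_pow, real_inner_comm,
      Real.norm_eq_abs, sq_abs]
    field_simp
    ring

theorem norm_halfspaceProj_sub_halfspaceProj_le (s : E) (b : ℝ) (v w : E) :
    ‖halfspaceProj s b v - halfspaceProj s b w‖ ≤ ‖v - w‖ := by
  set m := max (⟪s, v⟫ - b) 0 - max (⟪s, w⟫ - b) 0 with hm
  have hdiff : halfspaceProj s b v - halfspaceProj s b w = (v - w) - (m / ‖s‖ ^ 2) • s := by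
    rw [halfspaceProj, halfspaceProj, hm, sub_div, sub_smul]
    abel
  have hmono : 0 ≤ m * (2 * ⟪s, v - w⟫ - m) := by
    rw [hm, inner_sub_right]
    rcases max_cases (⟪s, v⟫ - b) 0 with ⟨h₁, _⟩ | ⟨h₁, _⟩ <;>
      rcases max_cases (⟪s, w⟫ - b) 0 with ⟨h₂, _⟩ | ⟨h₂, _⟩ <;>
      rw [h₁, h₂] <;> nlinarith [sq_nonneg (⟪s, v⟫ - ⟪s, w⟫)]
  rw [hdiff]
  refine le_of_sq_le_sq ?_ (norm_nonneg _)
  rw [norm_sub_div_norm_sq_smul_sq]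
  exact sub_le_self _ (by positivity)

theorem norm_halfspaceProj_sub_sq_le {s z : E} {b : ℝ} (hz : ⟪s, z⟫ ≤ b) (v : E) :
    ‖halfspaceProj s b v - z‖ ^ 2 ≤ ‖v - z‖ ^ 2 - max (⟪s, v⟫ - b) 0 ^ 2 / ‖s‖ ^ 2 := by
  rw [halfspaceProj, sub_right_comm, norm_sub_div_norm_sq_smul_sq, inner_sub_right]
  gcongr
  rcases max_cases (⟪s, v⟫ - b) 0 with ⟨h, _⟩ | ⟨h, _⟩ <;> rw [h] <;> nlinarith

theorem norm_halfspaceProj_sub_le {s z : E} {b : ℝ} (hz : ⟪s, z⟫ ≤ b) (v : E) :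
    ‖halfspaceProj s b v - z‖ ≤ ‖v - z‖ :=
  le_of_sq_le_sq ((norm_halfspaceProj_sub_sq_le hz v).trans (sub_le_self _ (by positivity)))
    (norm_nonneg _)

theorem norm_halfspaceProj_sub_le_sqrt_mul {s z v : E} {b σ G : ℝ} (hz : ⟪s, z⟫ ≤ b)
    (hsG : ‖s‖ ≤ G) (hσ : 0 ≤ σ) (hviol : σ * ‖v - z‖ ≤ max (⟪s, v⟫ - b) 0) :
    ‖halfspaceProj s b v - z‖ ≤ Real.sqrt (1 - σ ^ 2 / G ^ 2) * ‖v - z‖ := by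
  have hgain : (σ * ‖v - z‖) ^ 2 / G ^ 2 ≤ max (⟪s, v⟫ - b) 0 ^ 2 / ‖s‖ ^ 2 := by
    rcases eq_or_ne s 0 with rfl | hs
    · have hb : 0 ≤ b := by simpa using hz
      have : σ * ‖v - z‖ = 0 := le_antisymm (by simpa [hb] using hviol) (by positivity)
      simp [this]
    · have : 0 < ‖s‖ := norm_pos_iff.2 hs
      gcongr
  rw [← Real.sqrt_sq (norm_nonneg (v - z)), ← Real.sqrt_mul' _ (sq_nonneg _)]
  refine Real.le_sqrt_of_sq_le ?_
  calc ‖halfspaceProj s b v - z‖ ^ 2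
      ≤ ‖v - z‖ ^ 2 - max (⟪s, v⟫ - b) 0 ^ 2 / ‖s‖ ^ 2 := norm_halfspaceProj_sub_sq_le hz v
    _ ≤ ‖v - z‖ ^ 2 - (σ * ‖v - z‖) ^ 2 / G ^ 2 := by gcongr
    _ = (1 - σ ^ 2 / G ^ 2) * ‖v - z‖ ^ 2 := by ring

end HalfspaceProj

section ProjBall

variable {d : ℕ} {R : ℝ}

theorem projBall_mem_closedBall (hR : 0 < R) (v : EuclideanSpace ℝ (Fin d)) :
    projBall R v ∈ Metric.closedBall 0 R := by
  have hmax : 0 < max R ‖v‖ := lt_max_of_lt_left hR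
  rw [mem_closedBall_zero_iff, projBall, norm_smul, Real.norm_of_nonneg (by positivity),
    div_mul_eq_mul_div, div_le_iff₀ hmax]
  exact mul_le_mul_of_nonneg_left (le_max_right _ _) hR.le

theorem projBall_eq_halfspaceProj (hR : 0 < R) (v : EuclideanSpace ℝ (Fin d)) :
    projBall R v = halfspaceProj v (R * ‖v‖) v := by
  have hdefect : ⟪v, v⟫ - R * ‖v‖ = ‖v‖ * (‖v‖ - R) := by
    rw [real_inner_self_eq_norm_sq]
    ring
  rw [projBall, halfspaceProj, hdefect]
  rcases le_total ‖v‖ R with hv | hv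
  · rw [max_eq_left hv, div_self hR.ne', max_eq_right
      (mul_nonpos_of_nonneg_of_nonpos (norm_nonneg v) (sub_nonpos.2 hv))]
    simp
  · have : 0 < ‖v‖ := hR.trans_le hv
    rw [max_eq_right hv, max_eq_left (mul_nonneg this.le (sub_nonneg.2 hv))]
    nth_rewrite 3 [← one_smul ℝ v]
    rw [← sub_smul]
    congr 1
    field_simp
    ring

theorem norm_projBall_sub_le (hR : 0 < R) {z : EuclideanSpace ℝ (Fin d)}
    (hz : z ∈ Metric.closedBall 0 R) (v : EuclideanSpace ℝ (Fin d)) :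
    ‖projBall R v - z‖ ≤ ‖v - z‖ := by
  rw [projBall_eq_halfspaceProj hR]
  refine norm_halfspaceProj_sub_le ?_ v
  calc ⟪v, z⟫ ≤ ‖v‖ * ‖z‖ := real_inner_le_norm v z
    _ ≤ ‖v‖ * R := by gcongr; exact mem_closedBall_zero_iff.1 hz
    _ = R * ‖v‖ := mul_comm _ _

theorem mem_closedBall_of_forall_succ_eq_projBall {T : ℕ} {x w : ℕ → EuclideanSpace ℝ (Fin d)}
    (hR : 0 < R) (hx1 : x 1 ∈ Metric.closedBall 0 R)
    (hx : ∀ t ∈ Finset.Icc 1 T, x (t + 1) = projBall R (w t)) :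
    ∀ t ∈ Finset.Icc 1 T, x t ∈ Metric.closedBall 0 R := by
  intro t ht
  obtain ⟨ht1, htT⟩ := Finset.mem_Icc.1 ht
  rcases ht1.eq_or_lt with rfl | hlt
  · exact hx1
  · rw [← Nat.sub_add_cancel ht1, hx (t - 1) (Finset.mem_Icc.2 ⟨by lia, by lia⟩)]
    exact projBall_mem_closedBall hR _

theorem ite_projBall_eq_projBall_halfspaceProj (R a ρ : ℝ) (s x y : EuclideanSpace ℝ (Fin d)) :
    (if s ≠ 0 then projBall R (y - (max (a + ⟪s, y - x⟫ + ρ) 0 / ‖s‖ ^ 2) • s)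
      else projBall R y) = projBall R (halfspaceProj s (⟪s, x⟫ - (a + ρ)) y) := by
  split_ifs with hs
  · rw [halfspaceProj, inner_sub_right]
    ring_nf
  · rw [not_not.1 hs]
    simp [halfspaceProj]

end ProjBall

section Subgradient

variable {d : ℕ} {g : EuclideanSpace ℝ (Fin d) → ℝ} {c c' σ : ℝ}

theorem IsSubgradAt.inner_le {x s z : EuclideanSpace ℝ (Fin d)} (hs : IsSubgradAt g x s) :
    ⟪s, z⟫ ≤ ⟪s, x⟫ - (g x - g z) := by
  have := hs z
  rw [inner_sub_right] at this
  linarith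

theorem IsSubgradAt.sub_le_norm_mul_norm {x s z : EuclideanSpace ℝ (Fin d)}
    (hs : IsSubgradAt g x s) : g x - g z ≤ ‖s‖ * ‖x - z‖ := by
  have := real_inner_le_norm s (x - z)
  rw [inner_sub_right] at this
  linarith [hs.inner_le (z := z)]

theorem exists_lt_of_forall_isSubgradAt_le_norm {p : EuclideanSpace ℝ (Fin d)} (hσ : 0 < σ)
    (hp : ∀ s, IsSubgradAt g p s → σ ≤ ‖s‖) : ∃ z, g z < g p := by
  by_contra! hmin
  have hzero : IsSubgradAt g p 0 := fun y => by simpa using hmin y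
  exact absurd (hp 0 hzero) (by simpa using hσ)

theorem exists_pos_isSubgradAt_smul_of_normal (hg : ConvexOn ℝ Set.univ g)
    (hslater : ∃ w, g w < c) {u z : EuclideanSpace ℝ (Fin d)} (hu : u ≠ 0) (hz : g z ≤ c)
    (hnormal : ∀ y, g y ≤ c → ⟪u, y - z⟫ ≤ 0) :
    ∃ τ : ℝ, 0 < τ ∧ g z = c ∧ IsSubgradAt g z (τ • u) := by
  have hconcave : ConcaveOn ℝ Set.univ fun y => ⟪u, y - z⟫ := by
    simp only [inner_sub_right]
    exact ((innerₛₗ ℝ u).concaveOn convex_univ).sub (convexOn_const _ convex_univ)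
  obtain ⟨l, hl0, hl⟩ := exists_nonneg_forall_le_mul_of_convexOn_of_concaveOn
    (hg.sub (concaveOn_const c convex_univ)) hconcave (by simpa using hslater)
    (by simpa using hnormal)
  replace hl (y) : ⟪u, y - z⟫ ≤ l * (g y - c) := hl y trivial
  have hlpos : 0 < l := by
    refine hl0.lt_of_ne fun h => hu ?_
    have := hl (z + u)
    rw [← h, zero_mul, add_sub_cancel_left] at this
    exact real_inner_self_nonpos.1 this
  have hgz : g z = c := by
    have : 0 ≤ l * (g z - c) := by simpa using hl z
    linarith [nonneg_of_mul_nonneg_right this hlpos]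
  refine ⟨l⁻¹, inv_pos.2 hlpos, hgz, fun y => ?_⟩
  have := (inv_mul_le_iff₀ hlpos).2 (hl y)
  rw [real_inner_smul_left, hgz]
  linarith

theorem exists_mem_sublevel_mul_norm_sub_le (hg : ConvexOn ℝ Set.univ g) (hσ : 0 < σ)
    (hne : ∃ z, g z = c) (hc : ∀ z, g z = c → ∀ s, IsSubgradAt g z s → σ ≤ ‖s‖)
    {x : EuclideanSpace ℝ (Fin d)} (hx : c < g x) :
    ∃ z, g z ≤ c ∧ σ * ‖x - z‖ ≤ g x - c := by
  obtain ⟨p, hp⟩ := hne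
  have hslater : ∃ w, g w < c := hp ▸ exists_lt_of_forall_isSubgradAt_le_norm hσ (hc p hp)
  have hconvex : Convex ℝ {z | g z ≤ c} := by simpa using hg.convex_le c
  obtain ⟨z, hz, hnearest⟩ :=
    exists_norm_eq_iInf_of_complete_convex ⟨p, hp.le⟩
      (isClosed_sublevel_of_convexOn hg c).isComplete hconvex x
  have hnormal := (norm_eq_iInf_iff_real_inner_le_zero hconvex hz).1 hnearest
  have hxz : x - z ≠ 0 := sub_ne_zero.2 fun h => (h ▸ hx).not_ge hz
  obtain ⟨τ, hτ, hgz, hsub⟩ := exists_pos_isSubgradAt_smul_of_normal hg hslater hxz hz hnormal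
  refine ⟨z, hz, ?_⟩
  calc σ * ‖x - z‖ ≤ ‖τ • (x - z)‖ * ‖x - z‖ := by gcongr; exact hc z hgz _ hsub
    _ = ⟪τ • (x - z), x - z⟫ := by
      rw [norm_smul, Real.norm_of_nonneg hτ.le, real_inner_smul_left, real_inner_self_eq_norm_sq]
      ring
    _ ≤ g x - c := by linarith [hsub x]

theorem mul_infDist_sublevel_le (hg : ConvexOn ℝ Set.univ g) (hσ : 0 < σ)
    (hne : ∃ z, g z = c) (hc : ∀ z, g z = c → ∀ s, IsSubgradAt g z s → σ ≤ ‖s‖)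
    (hcc' : c ≤ c') (x : EuclideanSpace ℝ (Fin d)) :
    σ * Metric.infDist x {z | g z ≤ c'} ≤ max (g x - c') 0 := by
  rcases le_or_gt (g x) c' with hx | hx
  · rw [Metric.infDist_zero_of_mem (by exact hx), mul_zero]
    exact le_max_right _ _
  obtain ⟨z, hz, hxz⟩ := exists_mem_sublevel_mul_norm_sub_le hg hσ hne hc (hcc'.trans_lt hx)
  have hpos : 0 < g x - c := by linarith
  set θ := (g x - c') / (g x - c)
  have hθ0 : 0 ≤ θ := div_nonneg (by linarith) hpos.le
  have hθ1 : 0 ≤ 1 - θ := sub_nonneg.2 ((div_le_one hpos).2 (by linarith))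
  have hθmul : θ * (g x - c) = g x - c' := div_mul_cancel₀ _ hpos.ne'
  have hmem : (1 - θ) • x + θ • z ∈ {z | g z ≤ c'} :=
    calc g ((1 - θ) • x + θ • z) ≤ (1 - θ) * g x + θ * g z :=
          hg.2 trivial trivial hθ1 hθ0 (sub_add_cancel 1 θ)
      _ ≤ (1 - θ) * g x + θ * c := by gcongr
      _ = c' := by linarith
  have hdist : dist x ((1 - θ) • x + θ • z) = θ * ‖x - z‖ := by
    rw [dist_eq_norm, ← Real.norm_of_nonneg hθ0, ← norm_smul, Real.norm_of_nonneg hθ0]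
    congr 1
    module
  calc σ * Metric.infDist x {z | g z ≤ c'} ≤ σ * (θ * ‖x - z‖) := by
        gcongr; exact hdist ▸ Metric.infDist_le_dist_of_mem hmem
    _ = θ * (σ * ‖x - z‖) := by ring
    _ ≤ θ * (g x - c) := by gcongr
    _ = g x - c' := hθmul
    _ ≤ max (g x - c') 0 := le_max_left _ _

theorem IsSubgradAt.sub_le_mul_infDist_sublevel {x s : EuclideanSpace ℝ (Fin d)} {G : ℝ}
    (hs : IsSubgradAt g x s) (hsG : ‖s‖ ≤ G) (hclosed : IsClosed {z | g z ≤ c})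
    (hne : {z | g z ≤ c}.Nonempty) : g x - c ≤ G * Metric.infDist x {z | g z ≤ c} := by
  obtain ⟨z, hz, hdist⟩ := hclosed.exists_infDist_eq_dist hne x
  calc g x - c ≤ g x - g z := by gcongr; exact hz
    _ ≤ ‖s‖ * ‖x - z‖ := hs.sub_le_norm_mul_norm
    _ ≤ G * ‖x - z‖ := by gcongr
    _ = G * Metric.infDist x {z | g z ≤ c} := by rw [hdist, dist_eq_norm]

theorem IsSubgradAt.infDist_projBall_halfspaceProj_le {R G : ℝ}
    {x s : EuclideanSpace ℝ (Fin d)} (hs : IsSubgradAt g x s) (hsG : ‖s‖ ≤ G) (hR : 0 < R)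
    (hσ : 0 ≤ σ) (hclosed : IsClosed {z | g z ≤ c}) (hne : {z | g z ≤ c}.Nonempty)
    (hball : {z | g z ≤ c} ⊆ Metric.closedBall 0 R)
    (herror : σ * Metric.infDist x {z | g z ≤ c} ≤ max (g x - c) 0)
    (y : EuclideanSpace ℝ (Fin d)) :
    Metric.infDist (projBall R (halfspaceProj s (⟪s, x⟫ - (g x - c)) y)) {z | g z ≤ c} ≤
      Real.sqrt (1 - σ ^ 2 / G ^ 2) * Metric.infDist x {z | g z ≤ c} + ‖y - x‖ := by
  obtain ⟨z, hz, hdist⟩ := hclosed.exists_infDist_eq_dist hne x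
  rw [dist_eq_norm] at hdist
  rw [hdist] at herror ⊢
  set P := halfspaceProj s (⟪s, x⟫ - (g x - c))
  have hzP : ⟪s, z⟫ ≤ ⟪s, x⟫ - (g x - c) := hs.inner_le.trans (by gcongr; exact hz)
  have hcontract : ‖P x - z‖ ≤ Real.sqrt (1 - σ ^ 2 / G ^ 2) * ‖x - z‖ :=
    norm_halfspaceProj_sub_le_sqrt_mul hzP hsG hσ (by rwa [sub_sub_cancel])
  calc Metric.infDist (projBall R (P y)) {z | g z ≤ c} ≤ ‖projBall R (P y) - z‖ := by
        rw [← dist_eq_norm]; exact Metric.infDist_le_dist_of_mem hz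
    _ ≤ ‖P y - z‖ := norm_projBall_sub_le hR (hball hz) _
    _ ≤ ‖P x - z‖ + ‖P y - P x‖ := by
      rw [add_comm]; exact norm_sub_le_norm_sub_add_norm_sub _ _ _
    _ ≤ Real.sqrt (1 - σ ^ 2 / G ^ 2) * ‖x - z‖ + ‖y - x‖ :=
      add_le_add hcontract (norm_halfspaceProj_sub_halfspaceProj_le ..)

end Subgradient

theorem stmt1_general {d T : ℕ} {R Gv Gg ε σ η ρ : ℝ}
    {g : EuclideanSpace ℝ (Fin d) → ℝ}
    {v : ℕ → EuclideanSpace ℝ (Fin d) → EuclideanSpace ℝ (Fin d)}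
    {x y s : ℕ → EuclideanSpace ℝ (Fin d)}
    (hR : 0 < R) (hgconv : ConvexOn ℝ Set.univ g)
    (hA1 : {z | g z ≤ 0} ⊆ Metric.closedBall 0 R)
    (hA2 : ∀ t ∈ Finset.Icc 1 T, ∀ z ∈ Metric.closedBall 0 R, ‖v t z‖ ≤ Gv)
    (hA3 : ∀ z ∈ Metric.closedBall 0 R, ∀ sz, IsSubgradAt g z sz → ‖sz‖ ≤ Gg)
    (hGg : 0 < Gg) (hσ : 0 < σ) (hA4ne : ∃ z, g z = -ε)
    (hA4 : ∀ z, g z = -ε → ∀ sz, IsSubgradAt g z sz → σ ≤ ‖sz‖)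
    (hη : 0 ≤ η) (hρ0 : 0 ≤ ρ) (hρε : ρ ≤ ε) (hx1 : x 1 ∈ Metric.closedBall 0 R)
    (hs : ∀ t ∈ Finset.Icc 1 T, IsSubgradAt g (x t) (s t))
    (hy : ∀ t ∈ Finset.Icc 1 T, y t = x t - η • v t (x t))
    (hupd : ∀ t ∈ Finset.Icc 1 T,
      x (t + 1) = projBall R (halfspaceProj (s t) (⟪s t, x t⟫ - (g (x t) + ρ)) (y t))) :
    ∀ t ∈ Finset.Icc 1 T,
      g (x t) ≤ Gg * Real.sqrt (1 - σ ^ 2 / Gg ^ 2) ^ (t - 1) *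
          Metric.infDist (x 1) {z | g z ≤ -ρ} +
        η * Gg * Gv / (1 - Real.sqrt (1 - σ ^ 2 / Gg ^ 2)) - ρ := by
  set K := {z | g z ≤ -ρ}
  set q := Real.sqrt (1 - σ ^ 2 / Gg ^ 2)
  have hKclosed : IsClosed K := isClosed_sublevel_of_convexOn hgconv (-ρ)
  have hKne : K.Nonempty := hA4ne.imp fun z hz => hz.trans_le (neg_le_neg hρε)
  have hKball : K ⊆ Metric.closedBall 0 R := fun z hz => hA1 (hz.trans (neg_nonpos.2 hρ0))
  have hxball := mem_closedBall_of_forall_succ_eq_projBall hR hx1 hupd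
  have hsGg (t) (ht : t ∈ Finset.Icc 1 T) : ‖s t‖ ≤ Gg := hA3 _ (hxball t ht) _ (hs t ht)
  have hstep (t) (ht : t ∈ Finset.Icc 1 T) :
      Metric.infDist (x (t + 1)) K ≤ q * Metric.infDist (x t) K + η * Gv := by
    have hyx : ‖y t - x t‖ ≤ η * Gv := by
      rw [hy t ht, sub_sub_cancel_left, norm_neg, norm_smul, Real.norm_of_nonneg hη]
      exact mul_le_mul_of_nonneg_left (hA2 t ht _ (hxball t ht)) hη
    have hproj := (hs t ht).infDist_projBall_halfspaceProj_le (hsGg t ht) hR hσ.le hKclosed hKne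
      hKball (mul_infDist_sublevel_le hgconv hσ hA4ne hA4 (neg_le_neg hρε) (x t)) (y t)
    rw [sub_neg_eq_add, ← hupd t ht] at hproj
    exact hproj.trans (by gcongr)
  intro t ht
  obtain ⟨ht1, htT⟩ := Finset.mem_Icc.1 ht
  have hGv : 0 ≤ Gv := (norm_nonneg _).trans (hA2 t ht _ (hxball t ht))
  have hdist : Metric.infDist (x (t - 1 + 1)) K ≤
      q ^ (t - 1) * Metric.infDist (x 1) K + η * Gv / (1 - q) :=
    le_pow_mul_add_div_of_le_mul_add (a := fun n => Metric.infDist (x (n + 1)) K) (N := T)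
      (Real.sqrt_nonneg _) (sqrt_one_sub_sq_div_sq_lt_one hσ hGg) (mul_nonneg hη hGv)
      (fun n hn => hstep (n + 1) (Finset.mem_Icc.2 ⟨by lia, hn⟩)) (t - 1) (by lia)
  rw [Nat.sub_add_cancel ht1] at hdist
  have hgx := (hs t ht).sub_le_mul_infDist_sublevel (hsGg t ht) hKclosed hKne
  calc g (x t) ≤ Gg * Metric.infDist (x t) K - ρ := by linarith
    _ ≤ Gg * (q ^ (t - 1) * Metric.infDist (x 1) K + η * Gv / (1 - q)) - ρ := by gcongr
    _ = Gg * q ^ (t - 1) * Metric.infDist (x 1) K + η * Gg * Gv / (1 - q) - ρ := by ring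

theorem stmt1 {d T : ℕ} (hT : 1 ≤ T)
    {R Gf Gg ε σ η ρ : ℝ}
    (g : EuclideanSpace ℝ (Fin d) → ℝ)
    (f : ℕ → EuclideanSpace ℝ (Fin d) → ℝ)
    (x y s : ℕ → EuclideanSpace ℝ (Fin d))
    (hR : 0 < R) (hGf : 0 < Gf) (hGg : 0 < Gg)
    (hgconv : ConvexOn ℝ Set.univ g)
    (hA1 : {z : EuclideanSpace ℝ (Fin d) | g z ≤ 0} ⊆ Metric.closedBall 0 R)
    (hfconv : ∀ t ∈ Finset.Icc 1 T, ConvexOn ℝ Set.univ (f t))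
    (hfdiff : ∀ t ∈ Finset.Icc 1 T, Differentiable ℝ (f t))
    (hA2 : ∀ t ∈ Finset.Icc 1 T, ∀ z ∈ Metric.closedBall (0 : EuclideanSpace ℝ (Fin d)) R,
      ‖gradient (f t) z‖ ≤ Gf)
    (hA3 : ∀ z ∈ Metric.closedBall (0 : EuclideanSpace ℝ (Fin d)) R,
      ∀ sz, IsSubgradAt g z sz → ‖sz‖ ≤ Gg)
    (hσ : 0 < σ) (hε : 0 < ε) (hσGg : σ ≤ Gg)
    (hA4ne : ∃ z, g z = -ε)
    (hA4 : ∀ z : EuclideanSpace ℝ (Fin d), g z = -ε → ∀ sz, IsSubgradAt g z sz → σ ≤ ‖sz‖)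
    (hη : 0 < η) (hρ0 : 0 ≤ ρ) (hρε : ρ ≤ ε)
    (hx1 : x 1 ∈ Metric.closedBall (0 : EuclideanSpace ℝ (Fin d)) R)
    (hs : ∀ t ∈ Finset.Icc 1 T, IsSubgradAt g (x t) (s t))
    (hy : ∀ t ∈ Finset.Icc 1 T, y t = x t - η • gradient (f t) (x t))
    (hupd : ∀ t ∈ Finset.Icc 1 T,
      x (t + 1) = if s t ≠ 0 then
          projBall R (y t - ((max (g (x t) + ⟪s t, y t - x t⟫ + ρ) 0) / ‖s t‖ ^ 2) • s t)
        else projBall R (y t))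
    :
    ∀ t ∈ Finset.Icc 1 T,
      g (x t) ≤ Gg * Real.sqrt (1 - σ ^ 2 / Gg ^ 2) ^ (t - 1) *
          Metric.infDist (x 1) {z : EuclideanSpace ℝ (Fin d) | g z ≤ -ρ} +
        η * Gg * Gf / (1 - Real.sqrt (1 - σ ^ 2 / Gg ^ 2)) - ρ := by
  exact stmt1_general (v := fun t => gradient (f t)) hR hgconv hA1 hA2 hA3 hGg hσ hA4ne hA4 hη.le
    hρ0 hρε hx1 hs hy fun t ht => (hupd t ht).trans (ite_projBall_eq_projBall_halfspaceProj ..)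
end
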